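/- arXiv:2112.01091 — 7 statements merged into one kernel-verified Lean document; each statement's English description precedes it below -/
import Mathlib

section
/- Symmetry of the boundary functional under reversibility (the paper's identity M_{λ,ρ}(f'(ρ)−f'(p)) = M_{λ,ρ}(f'(p)−λ), eq. (x15)): fix λ, θ ∈ ℝ with Z(λ), Z(θ) ∈ (0,∞), and assume that the measure Π(dx,dy) := m_λ(dx) r(x,dy) on ℝ×ℝ is invariant under the swap (x,y) ↦ (y,x) (reversibility of m_λ for the boundary dynamics). Let q, q' ∈ ℝ with q + q' = θ − λ, and assume the functions (x,y) ↦ e^{(θ−λ)x}(e^{q(y−x)}−1) and (x,y) ↦ e^{(θ−λ)x}(e^{q'(y−x)}−1) are Π-integrable. Then M_{λ,θ}(q) = M_{λ,θ}(q'). -/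
/-!
Write `Π = m_λ ⊗ r` and `a = θ - λ`. Since `m_θ` has density `c e^{a x}` with respect to `m_λ`, where
`c = Z(λ) / Z(θ)`, the functional is `M_{λ,θ}(q) = c ∫ e^{a x} (e^{q (y - x)} - 1) dΠ`. With
`q + q' = a`, the integrands for `q` and `q'` are `e^{q' x + q y} - e^{a x}` and
`e^{q x + q' y} - e^{a x}`. Their difference is antisymmetric under `(x, y) ↦ (y, x)`, so its
integral against the swap-invariant `Π` vanishes. Only the difference is integrated, so integrability
of `e^{a x}` itself plays no role.
-/

open MeasureTheory ProbabilityTheory Real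

/-- Reweighting the first marginal commutes with the composition-product. -/
lemma withDensity_compProd_left (μ : Measure ℝ) [SFinite μ] (r : Kernel ℝ ℝ) [IsSFiniteKernel r]
    {f : ℝ → ENNReal} (hf : Measurable f) :
    (μ.withDensity f).compProd r = (μ.compProd r).withDensity (fun z => f z.1) := by
  ext s hs
  have hk : Measurable fun x => r x (Prod.mk x ⁻¹' s) := Kernel.measurable_kernel_prodMk_left hs
  have hf1 : Measurable fun z : ℝ × ℝ => f z.1 := hf.comp measurable_fst
  rw [Measure.compProd_apply hs, lintegral_withDensity_eq_lintegral_mul _ hf hk,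
    withDensity_apply _ hs, ← lintegral_indicator hs,
    Measure.lintegral_compProd (hf1.indicator hs)]
  refine lintegral_congr fun x => ?_
  have hind : ∀ y, s.indicator (fun z : ℝ × ℝ => f z.1) (x, y)
      = (Prod.mk x ⁻¹' s).indicator (fun _ => f x) y := fun y => rfl
  simp_rw [hind]
  rw [lintegral_indicator_const (measurable_prodMk_left hs)]
  rfl

/-- The integral of a swap-antisymmetric function against a swap-invariant measure vanishes. -/
lemma integral_eq_zero_of_swap_antisymm {μ : Measure (ℝ × ℝ)} (hμ : Measure.map Prod.swap μ = μ)
    {h : ℝ × ℝ → ℝ} (hh : ∀ z, h z.swap = -h z) : ∫ z, h z ∂μ = 0 := by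
  have key : ∫ z, h z ∂μ = ∫ z, h z.swap ∂μ := by
    conv_lhs => rw [← hμ]
    exact integral_map_equiv (MeasurableEquiv.prodComm : ℝ × ℝ ≃ᵐ ℝ × ℝ) h
  simp_rw [hh, integral_neg] at key
  linarith

/-- **Symmetry of the boundary functional under reversibility** (eq. (x15)):
if the measure `Π(dx,dy) = m_λ(dx) r(x,dy)` is invariant under the swap `(x,y) ↦ (y,x)`,
and `q + q' = θ − λ`, then `M_{λ,θ}(q) = M_{λ,θ}(q')`. -/
theorem boundary_functional_symmetry_of_reversible
    (𝔫 : Measure ℝ) [SigmaFinite 𝔫] (H : ℝ → ℝ) (hH : Measurable H)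
    (r : Kernel ℝ ℝ) [IsFiniteKernel r]
    (lam θ : ℝ)
    (Z : ℝ → ℝ) (hZ : ∀ t, Z t = ∫ x, Real.exp (t * x - H x) ∂𝔫)
    (hZlam_pos : 0 < Z lam)
    (hZlam_fin : Integrable (fun x => Real.exp (lam * x - H x)) 𝔫)
    (hZθ_pos : 0 < Z θ)
    (hZθ_fin : Integrable (fun x => Real.exp (θ * x - H x)) 𝔫)
    (m : ℝ → Measure ℝ)
    (hm : ∀ t, m t
      = 𝔫.withDensity (fun x => ENNReal.ofReal ((Z t)⁻¹ * Real.exp (t * x - H x))))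
    (hrev : Measure.map Prod.swap ((m lam).compProd r) = (m lam).compProd r)
    (q q' : ℝ) (hqq' : q + q' = θ - lam)
    (hint1 : Integrable
      (fun z : ℝ × ℝ => Real.exp ((θ - lam) * z.1) * (Real.exp (q * (z.2 - z.1)) - 1))
      ((m lam).compProd r))
    (hint2 : Integrable
      (fun z : ℝ × ℝ => Real.exp ((θ - lam) * z.1) * (Real.exp (q' * (z.2 - z.1)) - 1))
      ((m lam).compProd r)) :
    ∫ z : ℝ × ℝ, (Real.exp (q * (z.2 - z.1)) - 1) ∂((m θ).compProd r)
      = ∫ z : ℝ × ℝ, (Real.exp (q' * (z.2 - z.1)) - 1) ∂((m θ).compProd r) := by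
  have hmeas : ∀ t, Measurable fun x =>
      ENNReal.ofReal ((Z t)⁻¹ * Real.exp (t * x - H x)) := fun t => by fun_prop
  have hsf : SFinite (m lam) := by rw [hm]; infer_instance
  have hdens : Measurable fun x : ℝ =>
      ENNReal.ofReal (Z lam / Z θ * Real.exp ((θ - lam) * x)) := by fun_prop
  have hθ : m θ = (m lam).withDensity
      (fun x => ENNReal.ofReal (Z lam / Z θ * Real.exp ((θ - lam) * x))) := by
    rw [hm θ, hm lam, ← withDensity_mul _ (hmeas lam) hdens]
    congr 1
    funext x
    rw [Pi.mul_apply, ← ENNReal.ofReal_mul (by positivity)]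
    congr 1
    rw [show θ * x - H x = (lam * x - H x) + (θ - lam) * x by ring, Real.exp_add]
    field_simp
  have hM : ∀ p : ℝ, ∫ z : ℝ × ℝ, (Real.exp (p * (z.2 - z.1)) - 1) ∂((m θ).compProd r)
      = Z lam / Z θ * ∫ z : ℝ × ℝ,
        Real.exp ((θ - lam) * z.1) * (Real.exp (p * (z.2 - z.1)) - 1) ∂((m lam).compProd r) := by
    intro p
    have hdens1 : Measurable fun z : ℝ × ℝ =>
        ENNReal.ofReal (Z lam / Z θ * Real.exp ((θ - lam) * z.1)) := by fun_prop
    rw [hθ, withDensity_compProd_left _ _ hdens,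
      integral_withDensity_eq_integral_toReal_smul hdens1
        (ae_of_all _ fun _ => ENNReal.ofReal_lt_top), ← integral_const_mul]
    refine integral_congr_ae (ae_of_all _ fun z => ?_)
    simp only [smul_eq_mul]
    rw [ENNReal.toReal_ofReal (by positivity), mul_assoc]
  rw [hM q, hM q']
  congr 1
  rw [← sub_eq_zero, ← integral_sub hint1 hint2]
  refine integral_eq_zero_of_swap_antisymm hrev fun z => ?_
  -- the difference is `e^{q' x + q y} - e^{q x + q' y}`, as the `e^{(θ - lam) x}` terms cancel
  have hexp : ∀ x y : ℝ, Real.exp ((θ - lam) * x) * (Real.exp (q * (y - x)) - 1)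
      - Real.exp ((θ - lam) * x) * (Real.exp (q' * (y - x)) - 1)
      = Real.exp (q' * x + q * y) - Real.exp (q * x + q' * y) := by
    intro x y
    rw [← hqq', show q' * x + q * y = (q + q') * x + q * (y - x) by ring,
      show q * x + q' * y = (q + q') * x + q' * (y - x) by ring, Real.exp_add, Real.exp_add]
    ring
  simp only [Prod.fst_swap, Prod.snd_swap, hexp]
  rw [neg_sub, add_comm (q' * z.2), add_comm (q * z.2)]
end

section
/- Sign of the stationary boundary current under reversibility (property (3-06)): fix λ, θ ∈ ℝ with Z(λ), Z(θ) ∈ (0,∞), assume the measure Π(dx,dy) := m_λ(dx) r(x,dy) is invariant under the swap (x,y) ↦ (y,x), and assume (x,y) ↦ |y−x| e^{(θ−λ)x} and (x,y) ↦ |y−x| e^{(θ−λ)y} are Π-integrable. Then: (i) ∫∫ (y−x) m_θ(dx) r(x,dy) = −(Z(λ)/(2Z(θ))) ∫∫ (e^{(θ−λ)y} − e^{(θ−λ)x})(y−x) Π(dx,dy); (ii) (θ−λ) · ∫∫ (y−x) m_θ(dx) r(x,dy) ≤ 0; and (iii) the inequality in (ii) is strict whenever θ ≠ λ and Π({(x,y)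 : x ≠ y}) > 0. -/
/-!
Let `Π = m_λ ⊗ r` and `c = θ - λ`. Since `m_θ` has density `(Z λ / Z θ) e^{c x}` with respect to
`m_λ`, the boundary current at `θ` equals `(Z λ / Z θ) A`, where `A = ∫ e^{c x} (y - x) dΠ`
(`compProd_withDensity_left`). Swap invariance of `Π` gives `∫ e^{c y} (y - x) dΠ = -A`, hence
`∫ (e^{c y} - e^{c x}) (y - x) dΠ = -2 A` (`integral_exp_sub_of_swap`), which is (i). The signs in
(ii) and (iii) follow because `exp` is strictly increasing, so that `(e^b - e^a) (b - a) > 0` for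
`a ≠ b`; this is applied with `a = c x` and `b = c y`.
-/

open MeasureTheory ProbabilityTheory Real

/-- Reweighting the first marginal of `μ ⊗ₘ κ` reweights the joint measure by the same density. -/
lemma compProd_withDensity_left {α β : Type*} [MeasurableSpace α] [MeasurableSpace β]
    (μ : Measure α) [SFinite μ] (κ : Kernel α β) [IsSFiniteKernel κ]
    {f : α → ENNReal} (hf : Measurable f) :
    (μ.withDensity f).compProd κ = (μ.compProd κ).withDensity (fun z => f z.1) := by
  ext s hs
  have hk : Measurable fun a => κ a (Prod.mk a ⁻¹' s) := Kernel.measurable_kernel_prodMk_left hs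
  rw [Measure.compProd_apply hs, lintegral_withDensity_eq_lintegral_mul _ hf hk,
    withDensity_apply _ hs, ← lintegral_indicator hs,
    Measure.lintegral_compProd (Measurable.indicator (by fun_prop) hs)]
  refine lintegral_congr fun a => ?_
  have hsec : (fun b => s.indicator (fun z : α × β => f z.1) (a, b))
      = (Prod.mk a ⁻¹' s).indicator fun _ => f a := rfl
  rw [hsec, lintegral_indicator_const (measurable_prodMk_left hs), Pi.mul_apply]

lemma exp_sub_mul_sub_nonneg (a b : ℝ) : 0 ≤ (exp b - exp a) * (b - a) := by
  rcases le_total a b with h | h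
  · exact mul_nonneg (sub_nonneg.2 (exp_le_exp.2 h)) (sub_nonneg.2 h)
  · exact mul_nonneg_of_nonpos_of_nonpos (sub_nonpos.2 (exp_le_exp.2 h)) (sub_nonpos.2 h)

/-- The antisymmetry of `y - x` under the swap turns the weight `e^{c x}` into `-e^{c y}`. -/
lemma integral_exp_sub_of_swap {P : Measure (ℝ × ℝ)} (hP : Measure.map Prod.swap P = P) (c : ℝ)
    (h1 : Integrable (fun z : ℝ × ℝ => exp (c * z.1) * (z.2 - z.1)) P)
    (h2 : Integrable (fun z : ℝ × ℝ => exp (c * z.2) * (z.2 - z.1)) P) :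
    ∫ z : ℝ × ℝ, (exp (c * z.2) - exp (c * z.1)) * (z.2 - z.1) ∂P
      = -2 * ∫ z : ℝ × ℝ, exp (c * z.1) * (z.2 - z.1) ∂P := by
  have hB : ∫ z : ℝ × ℝ, exp (c * z.2) * (z.2 - z.1) ∂P
      = -∫ z : ℝ × ℝ, exp (c * z.1) * (z.2 - z.1) ∂P := by
    conv_lhs => rw [← hP]
    rw [integral_map (by fun_prop) (by fun_prop), ← integral_neg]
    congr with z
    simp only [Prod.fst_swap, Prod.snd_swap]
    ring
  simp_rw [sub_mul (exp _)]
  rw [integral_sub h2 h1, hB]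
  ring

/-- **Sign of the stationary boundary current under reversibility** (property (3-06)):
(i) the boundary current at chemical potential `θ` is given by minus a positive-definite
quadratic-type expression; (ii) `(θ−λ) ⬝ (boundary current) ≤ 0`; (iii) the inequality
is strict when `θ ≠ λ` and the jump measure charges `{x ≠ y}`. -/
theorem boundary_current_sign_of_reversible
    (𝔫 : Measure ℝ) [SigmaFinite 𝔫] (H : ℝ → ℝ) (hH : Measurable H)
    (r : Kernel ℝ ℝ) [IsFiniteKernel r]
    (lam θ : ℝ)
    (Z : ℝ → ℝ) (hZ : ∀ t, Z t = ∫ x, Real.exp (t * x - H x) ∂𝔫)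
    (hZlam_pos : 0 < Z lam)
    (hZlam_fin : Integrable (fun x => Real.exp (lam * x - H x)) 𝔫)
    (hZθ_pos : 0 < Z θ)
    (hZθ_fin : Integrable (fun x => Real.exp (θ * x - H x)) 𝔫)
    (m : ℝ → Measure ℝ)
    (hm : ∀ t, m t
      = 𝔫.withDensity (fun x => ENNReal.ofReal ((Z t)⁻¹ * Real.exp (t * x - H x))))
    (hrev : Measure.map Prod.swap ((m lam).compProd r) = (m lam).compProd r)
    (hint1 : Integrable (fun z : ℝ × ℝ => |z.2 - z.1| * Real.exp ((θ - lam) * z.1))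
      ((m lam).compProd r))
    (hint2 : Integrable (fun z : ℝ × ℝ => |z.2 - z.1| * Real.exp ((θ - lam) * z.2))
      ((m lam).compProd r)) :
    (∫ z : ℝ × ℝ, (z.2 - z.1) ∂((m θ).compProd r)
        = -(Z lam / (2 * Z θ)) *
            ∫ z : ℝ × ℝ, (Real.exp ((θ - lam) * z.2) - Real.exp ((θ - lam) * z.1))
              * (z.2 - z.1) ∂((m lam).compProd r))
    ∧ ((θ - lam) * ∫ z : ℝ × ℝ, (z.2 - z.1) ∂((m θ).compProd r) ≤ 0)
    ∧ (θ ≠ lam → 0 < ((m lam).compProd r) {z : ℝ × ℝ | z.1 ≠ z.2} →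
        (θ - lam) * ∫ z : ℝ × ℝ, (z.2 - z.1) ∂((m θ).compProd r) < 0) := by
  set c := θ - lam with hc
  have hmeas : ∀ t, Measurable fun x => ENNReal.ofReal ((Z t)⁻¹ * exp (t * x - H x)) :=
    fun t => by fun_prop
  have hfin : SFinite (m lam) := by rw [hm]; infer_instance
  set P := (m lam).compProd r with hPdef
  have hwm : Measurable fun x : ℝ => ENNReal.ofReal (Z lam / Z θ * exp (c * x)) := by fun_prop
  have hmθ : m θ = (m lam).withDensity
      fun x => ENNReal.ofReal (Z lam / Z θ * exp (c * x)) := by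
    rw [hm θ, hm lam, ← withDensity_mul _ (hmeas lam) hwm]
    congr with x
    rw [Pi.mul_apply, ← ENNReal.ofReal_mul (by positivity)]
    congr 1
    have hexp : exp (θ * x - H x) = exp (lam * x - H x) * exp (c * x) := by
      rw [← exp_add, hc]; congr 1; ring
    rw [hexp]
    field_simp
  have hcur : ∫ z : ℝ × ℝ, (z.2 - z.1) ∂((m θ).compProd r)
      = Z lam / Z θ * ∫ z : ℝ × ℝ, exp (c * z.1) * (z.2 - z.1) ∂P := by
    rw [hmθ, compProd_withDensity_left _ _ hwm,
      integral_withDensity_eq_integral_toReal_smul (by fun_prop)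
        (ae_of_all _ fun _ => ENNReal.ofReal_lt_top), ← integral_const_mul]
    congr with z
    rw [ENNReal.toReal_ofReal (by positivity), smul_eq_mul, mul_assoc]
  have h1 : Integrable (fun z : ℝ × ℝ => exp (c * z.1) * (z.2 - z.1)) P := by
    refine hint1.mono (by fun_prop) (ae_of_all _ fun z => le_of_eq ?_)
    simp [mul_comm]
  have h2 : Integrable (fun z : ℝ × ℝ => exp (c * z.2) * (z.2 - z.1)) P := by
    refine hint2.mono (by fun_prop) (ae_of_all _ fun z => le_of_eq ?_)
    simp [mul_comm]
  set Q := ∫ z : ℝ × ℝ, (exp (c * z.2) - exp (c * z.1)) * (z.2 - z.1) ∂P with hQ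
  have hi : ∫ z : ℝ × ℝ, (z.2 - z.1) ∂((m θ).compProd r) = -(Z lam / (2 * Z θ)) * Q := by
    rw [hcur, hQ, integral_exp_sub_of_swap hrev c h1 h2]
    field_simp
  have hcQ : c * Q = ∫ z : ℝ × ℝ, (exp (c * z.2) - exp (c * z.1)) * (c * z.2 - c * z.1) ∂P := by
    rw [hQ, ← integral_const_mul]
    congr with z
    ring
  have hK : 0 < Z lam / (2 * Z θ) := by positivity
  have hnn : 0 ≤ c * Q := hcQ ▸ integral_nonneg fun z => exp_sub_mul_sub_nonneg _ _
  refine ⟨hi, ?_, fun hne hpos => ?_⟩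
  · rw [hi]
    nlinarith [mul_nonneg hK.le hnn]
  · have hc0 : c ≠ 0 := sub_ne_zero.2 hne
    have hQpos : 0 < c * Q := by
      rw [hcQ, integral_pos_iff_support_of_nonneg (fun z => exp_sub_mul_sub_nonneg _ _)]
      · refine hpos.trans_le (measure_mono fun z hz => ?_)
        have hz' : c * z.2 ≠ c * z.1 := fun h => hz (mul_left_cancel₀ hc0 h).symm
        exact mul_ne_zero (sub_ne_zero.2 fun h => hz' (exp_injective h)) (sub_ne_zero.2 hz')
      · refine ((h2.sub h1).const_mul c).congr (ae_of_all _ fun z => ?_)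
        simp only [Pi.sub_apply]
        ring
    rw [hi]
    nlinarith [mul_pos hK hQpos]
end

section
/- Identity (x18) for the exclusion process (coincidence of the boundary conditions of the Hamilton–Jacobi auxiliary equation and of the hydrodynamic equation): let μ ∈ ℝ, R := e^μ/(1+e^μ), and let ϱ, p ∈ (0,1) with ϱ ≠ p. Set q := log( ϱ(1−p) / (p(1−ϱ)) ). Then (p(1−p)/(ϱ−p)) · [ (1−ϱ) R (e^q − 1) + ϱ (1−R) (e^{−q} − 1) ] = (1−p) R − p (1−R). -/
open Real

/-- **Identity (x18) for the exclusion process**: with `R = e^μ/(1+e^μ)` and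
`q = f'(ϱ) − f'(p) = log(ϱ(1−p)/(p(1−ϱ)))`, one has
`σ(p)/(d(ϱ)−d(p)) · M^{bd}_{μ,ϱ}(q) = (M^{bd}_{μ,p})'(0)`, i.e. the boundary
conditions of the auxiliary Hamilton–Jacobi equation coincide with those of the
hydrodynamic equation. -/
theorem exclusion_identity_x18
    (μ : ℝ) (R : ℝ) (hR : R = Real.exp μ / (1 + Real.exp μ))
    (ϱ p : ℝ) (hϱ : ϱ ∈ Set.Ioo (0:ℝ) 1) (hp : p ∈ Set.Ioo (0:ℝ) 1)
    (hne : ϱ ≠ p)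
    (q : ℝ) (hq : q = Real.log (ϱ * (1 - p) / (p * (1 - ϱ)))) :
    (p * (1 - p) / (ϱ - p)) *
        ((1 - ϱ) * R * (Real.exp q - 1) + ϱ * (1 - R) * (Real.exp (-q) - 1))
      = (1 - p) * R - p * (1 - R) := by
  obtain ⟨hϱ0, hϱ1⟩ := hϱ
  obtain ⟨hp0, hp1⟩ := hp
  have h1 : 0 < 1 - ϱ := sub_pos.mpr hϱ1
  have h2 : 0 < 1 - p := sub_pos.mpr hp1
  have hd : ϱ - p ≠ 0 := sub_ne_zero.mpr hne
  have hexp : Real.exp q = ϱ * (1 - p) / (p * (1 - ϱ)) := by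
    rw [hq, Real.exp_log (by positivity)]
  -- Both exponential increments carry the factor `ϱ - p`, which cancels the prefactor.
  have hpos : Real.exp q - 1 = (ϱ - p) / (p * (1 - ϱ)) := by
    rw [hexp]
    field_simp
    ring
  have hneg : Real.exp (-q) - 1 = -(ϱ - p) / (ϱ * (1 - p)) := by
    rw [Real.exp_neg, hexp]
    field_simp
    ring
  rw [hpos, hneg]
  field_simp
  ring
end

section
/- One-dimensional decomposition of the bulk Hamiltonian via integration by parts (the core identity of Section 6): let I ⊆ ℝ be an open interval, f₁ : I → ℝ of class C², σ, D, d : I → ℝ with d of class C¹, d' = D, and D = σ · f₁' on I (Einstein relation, with f₁ playing the role of f'). Let ρ : [0,1] → I be C¹ and F : [0,1] → I be C². Set Γ := f₁∘ρ − f₁∘F and G := f₁∘F. Then −∫_0^1 D(ρ(x)) ρ'(x) Γ'(x) dx + ∫_0^1 σ(ρ(x)) Γ'(x)² dx = ∫_0^1 ( d(ρ(x)) − d(F(x)) ) G''(x) dx + ∫_0^1 ( σ(ρ(x)) − σ(F(x)) ) G'(x)² dx − [ ( d(ρ(x)) − d(F(x)) ) G'(x) ]_{x=0}^{x=1}. 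-/
/-!
By the chain rule and the Einstein relation, `D(ρ)ρ' = σ(ρ)(f₁∘ρ)' = σ(ρ)(Γ' + G')` and
`D(F)F' = σ(F)G'`. The first identity collapses the integrand on the left-hand side to
`-σ(ρ)Γ'G'`. Integrating `(d(ρ) - d(F))G''` by parts produces the boundary term and
`-(σ(ρ)(Γ' + G') - σ(F)G')G'`, and adding `(σ(ρ) - σ(F))G'²` leaves `-σ(ρ)Γ'G'` again.
-/

open MeasureTheory Real Set intervalIntegral

/-- Chain rule combined with the Einstein relation: `D(u)u' = σ(u)(f₁∘u)'`, where `(f₁∘u)'` is any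
derivative of `f₁∘u` within `[0,1]` (it is unique there). -/
lemma einstein_chain_rule {I : Set ℝ} (hIopen : IsOpen I) {f₁ σ D : ℝ → ℝ}
    (hf₁ : ContDiffOn ℝ 2 f₁ I) (hEinstein : ∀ x ∈ I, D x = σ x * deriv f₁ x)
    {u : ℝ → ℝ} {x u' g' : ℝ} (hx : x ∈ Icc (0:ℝ) 1) (hux : u x ∈ I)
    (hu : HasDerivWithinAt u u' (Icc (0:ℝ) 1) x)
    (hg : HasDerivWithinAt (fun y => f₁ (u y)) g' (Icc (0:ℝ) 1) x) :
    D (u x) * u' = σ (u x) * g' := by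
  have hf : HasDerivAt f₁ (deriv f₁ (u x)) (u x) :=
    ((hf₁.differentiableOn (by norm_num)).differentiableAt
      (hIopen.mem_nhds hux)).hasDerivAt
  have h : g' = deriv f₁ (u x) * u' :=
    ((uniqueDiffOn_Icc zero_lt_one) x hx).eq_deriv _ hg (hf.comp_hasDerivWithinAt x hu)
  rw [hEinstein _ hux, h]
  ring

/-- **One-dimensional decomposition of the bulk Hamiltonian via integration by parts**
(the core identity of Section 6): with the Einstein relation `D = σ f₁'`, `d' = D`,
`Γ = f₁∘ρ − f₁∘F` and `G = f₁∘F`,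
`−∫ D(ρ)ρ'Γ' + ∫ σ(ρ)(Γ')² = ∫ (d(ρ)−d(F))G'' + ∫ (σ(ρ)−σ(F))(G')² − [(d(ρ)−d(F))G']₀¹`. -/
theorem bulk_Hamiltonian_decomposition_1d
    (I : Set ℝ) (hIopen : IsOpen I) (hIconv : Convex ℝ I)
    (f₁ σ D d : ℝ → ℝ)
    (hf₁ : ContDiffOn ℝ 2 f₁ I)
    (hσc : ContinuousOn σ I)
    (hd : ∀ x ∈ I, HasDerivAt d (D x) x)
    (hEinstein : ∀ x ∈ I, D x = σ x * deriv f₁ x)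
    (ρ ρ' F F' F'' : ℝ → ℝ)
    (hρmem : ∀ x ∈ Icc (0:ℝ) 1, ρ x ∈ I)
    (hFmem : ∀ x ∈ Icc (0:ℝ) 1, F x ∈ I)
    (hρ : ∀ x ∈ Icc (0:ℝ) 1, HasDerivWithinAt ρ (ρ' x) (Icc (0:ℝ) 1) x)
    (hρ'c : ContinuousOn ρ' (Icc (0:ℝ) 1))
    (hF : ∀ x ∈ Icc (0:ℝ) 1, HasDerivWithinAt F (F' x) (Icc (0:ℝ) 1) x)
    (hF' : ∀ x ∈ Icc (0:ℝ) 1, HasDerivWithinAt F' (F'' x) (Icc (0:ℝ) 1) x)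
    (hF'c : ContinuousOn F' (Icc (0:ℝ) 1)) (hF''c : ContinuousOn F'' (Icc (0:ℝ) 1))
    (Γ Γ' G G' G'' : ℝ → ℝ)
    (hΓdef : ∀ x, Γ x = f₁ (ρ x) - f₁ (F x))
    (hGdef : ∀ x, G x = f₁ (F x))
    (hΓ : ∀ x ∈ Icc (0:ℝ) 1, HasDerivWithinAt Γ (Γ' x) (Icc (0:ℝ) 1) x)
    (hΓ'c : ContinuousOn Γ' (Icc (0:ℝ) 1))
    (hG : ∀ x ∈ Icc (0:ℝ) 1, HasDerivWithinAt G (G' x) (Icc (0:ℝ) 1) x)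
    (hG' : ∀ x ∈ Icc (0:ℝ) 1, HasDerivWithinAt G' (G'' x) (Icc (0:ℝ) 1) x)
    (hG'c : ContinuousOn G' (Icc (0:ℝ) 1)) (hG''c : ContinuousOn G'' (Icc (0:ℝ) 1)) :
    -(∫ x in (0:ℝ)..1, D (ρ x) * ρ' x * Γ' x)
      + ∫ x in (0:ℝ)..1, σ (ρ x) * Γ' x ^ 2
    = (∫ x in (0:ℝ)..1, (d (ρ x) - d (F x)) * G'' x)
      + (∫ x in (0:ℝ)..1, (σ (ρ x) - σ (F x)) * G' x ^ 2)
      - ((d (ρ 1) - d (F 1)) * G' 1 - (d (ρ 0) - d (F 0)) * G' 0) := by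
  have hG_eq : G = fun y => f₁ (F y) := funext hGdef
  have hΓG_eq : Γ + G = fun y => f₁ (ρ y) := by
    funext y
    simp [hΓdef, hGdef]
  have hDF : ∀ x ∈ Icc (0:ℝ) 1, D (F x) * F' x = σ (F x) * G' x := fun x hx =>
    einstein_chain_rule hIopen hf₁ hEinstein hx (hFmem x hx) (hF x hx) (hG_eq ▸ hG x hx)
  have hDρ : ∀ x ∈ Icc (0:ℝ) 1, D (ρ x) * ρ' x = σ (ρ x) * (Γ' x + G' x) := fun x hx =>
    einstein_chain_rule hIopen hf₁ hEinstein hx (hρmem x hx) (hρ x hx)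
      (hΓG_eq ▸ (hΓ x hx).add (hG x hx))
  have hσρ : ContinuousOn (fun x => σ (ρ x)) (Icc 0 1) :=
    hσc.comp (fun x hx => (hρ x hx).continuousWithinAt) hρmem
  have hσF : ContinuousOn (fun x => σ (F x)) (Icc 0 1) :=
    hσc.comp (fun x hx => (hF x hx).continuousWithinAt) hFmem
  have hint : ∀ {h : ℝ → ℝ}, ContinuousOn h (Icc 0 1) → IntervalIntegrable h volume 0 1 :=
    fun hh => hh.intervalIntegrable_of_Icc zero_le_one
  have hu : ∀ x ∈ Icc (0:ℝ) 1, HasDerivWithinAt (fun y => d (ρ y) - d (F y))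
      (σ (ρ x) * (Γ' x + G' x) - σ (F x) * G' x) (Icc 0 1) x := by
    intro x hx
    rw [← hDρ x hx, ← hDF x hx]
    exact ((hd _ (hρmem x hx)).comp_hasDerivWithinAt x (hρ x hx)).sub
      ((hd _ (hFmem x hx)).comp_hasDerivWithinAt x (hF x hx))
  have hu'c : ContinuousOn (fun x => σ (ρ x) * (Γ' x + G' x) - σ (F x) * G' x) (Icc 0 1) :=
    (hσρ.mul (hΓ'c.add hG'c)).sub (hσF.mul hG'c)
  have hparts := integral_mul_deriv_eq_deriv_mul_of_hasDerivWithinAt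
    (by rwa [uIcc_of_le zero_le_one]) (by rwa [uIcc_of_le zero_le_one])
    (hint hu'c) (hint hG''c)
  have hL : (∫ x in (0:ℝ)..1, D (ρ x) * ρ' x * Γ' x)
      = ∫ x in (0:ℝ)..1, σ (ρ x) * (Γ' x + G' x) * Γ' x := by
    refine integral_congr fun x hx => ?_
    rw [uIcc_of_le zero_le_one] at hx
    simp only [hDρ x hx]
  have i₁ := hint ((hσρ.mul (hΓ'c.add hG'c)).mul hΓ'c)
  have i₂ := hint (hσρ.mul (hΓ'c.pow 2))
  have i₃ := hint ((hσρ.sub hσF).mul (hG'c.pow 2))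
  have i₄ := hint (hu'c.mul hG'c)
  have key : (∫ x in (0:ℝ)..1, σ (ρ x) * Γ' x ^ 2)
        - (∫ x in (0:ℝ)..1, σ (ρ x) * (Γ' x + G' x) * Γ' x)
      = (∫ x in (0:ℝ)..1, (σ (ρ x) - σ (F x)) * G' x ^ 2)
        - ∫ x in (0:ℝ)..1, (σ (ρ x) * (Γ' x + G' x) - σ (F x) * G' x) * G' x := by
    refine (integral_sub i₂ i₁).symm.trans (Eq.trans ?_ (integral_sub i₃ i₄))
    -- Both integrands equal `-σ(ρ)Γ'G'` pointwise.
    refine integral_congr fun x _ => ?_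
    simp only [Pi.mul_apply, Pi.add_apply, Pi.pow_apply]
    ring
  rw [hL, hparts]
  linarith
end

section
/- Hamilton–Jacobi solution for the one-dimensional exclusion process in weak contact with reservoirs (eq. (3-13c)): let λ₀, λ₁ ∈ ℝ, ϱ_k := e^{λ_k}/(1+e^{λ_k}), κ₀, κ₁ > 0. Let ρ : [0,1] → (0,1) be C¹ and F : [0,1] → (0,1) be C² such that F''(x) F(x) (1−F(x)) = (ρ(x) − F(x)) F'(x)² for all x ∈ [0,1], with Robin boundary conditions F'(1) = κ₁ (ϱ₁ − F(1)) and −F'(0) = κ₀ (ϱ₀ − F(0)). Set Γ := log(ρ/(1−ρ)) − log(F/(1−F)). Then −∫_0^1 ρ'(x) Γ'(x) dx + ∫_0^1 ρ(x)(1−ρ(x)) Γ'(x)² dx + κ₀ [ (1−ρ(0)) ϱ₀ (e^{Γ(0)} − 1) + ρ(0)(1−ϱ₀)(e^{−Γ(0)} − 1) ] + κ₁ [ (1−ρ(1)) ϱ₁ (e^{Γ(1)} − 1) + ρ(1)(1−ϱ₁)(e^{−Γ(1)} − 1) ] = 0, i.e. Γ solves the Hamilton–Jacobi equation H_{0,λ}(ρ,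 Γ) = 0 for the quasi-potential. -/
/-!
Since `Γ' = ρ'/(ρ(1-ρ)) - F'/(F(1-F))`, the bulk integrand `-ρ'Γ' + ρ(1-ρ)Γ'²` equals
`-ρ'F'/(F(1-F)) + ρ(1-ρ)F'²/(F(1-F))²`, and the equation for `F` makes this the exact derivative
of `-(ρ-F)F'/(F(1-F))` (`bulk_identity`). The bulk terms therefore reduce to boundary values, which
the Robin conditions turn into `-κ(ρ-F)(ϱ-F)/(F(1-F))` at each end point. The reservoir term at
that end is the opposite of this, because `e^Γ = ρ(1-F)/((1-ρ)F)` (`reservoir_identity`).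
-/

open MeasureTheory Real Set intervalIntegral

/-- Boundary functional of the exclusion process evaluated at the momentum `f'(r) - f'(F)`. -/
lemma reservoir_identity {r F : ℝ} (p : ℝ) (hr : r ∈ Ioo (0:ℝ) 1) (hF : F ∈ Ioo (0:ℝ) 1) :
    (1 - r) * p * (Real.exp (Real.log (r / (1 - r)) - Real.log (F / (1 - F))) - 1)
      + r * (1 - p) * (Real.exp (-(Real.log (r / (1 - r)) - Real.log (F / (1 - F)))) - 1)
    = (r - F) * (p - F) / (F * (1 - F)) := by
  have h1 := hr.1
  have h2 : 0 < 1 - r := sub_pos.2 hr.2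
  have h3 := hF.1
  have h4 : 0 < 1 - F := sub_pos.2 hF.2
  rw [Real.exp_neg, Real.exp_sub, Real.exp_log (div_pos h1 h2), Real.exp_log (div_pos h3 h4)]
  field_simp
  ring

lemma hasDerivWithinAt_log_odds {g : ℝ → ℝ} {g' x : ℝ} {s : Set ℝ}
    (hg : HasDerivWithinAt g g' s x) (hx : g x ∈ Ioo (0:ℝ) 1) :
    HasDerivWithinAt (fun y => Real.log (g y / (1 - g y))) (g' / (g x * (1 - g x))) s x := by
  have h1 := hx.1
  have h2 : 0 < 1 - g x := sub_pos.2 hx.2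
  have h := (hg.div (hg.const_sub 1) h2.ne').log (div_pos h1 h2).ne'
  refine h.congr_deriv ?_
  change _ / _ / (g x / (1 - g x)) = _
  field_simp
  ring

/-- Pointwise form of the bulk computation: `dr`, `dF`, `ddF` stand for `ρ'`, `F'`, `F''`. The left
side is the quotient-rule derivative of `-(ρ-F)F'/(F(1-F))`. -/
lemma bulk_identity {r dr F dF ddF : ℝ} (hr : r ∈ Ioo (0:ℝ) 1) (hF : F ∈ Ioo (0:ℝ) 1)
    (hode : ddF * F * (1 - F) = (r - F) * dF ^ 2) :
    -((((dr - dF) * dF + (r - F) * ddF) * (F * (1 - F))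
        - (r - F) * dF * (dF * (1 - F) + F * -dF)) / (F * (1 - F)) ^ 2)
    = -(dr * (dr / (r * (1 - r)) - dF / (F * (1 - F))))
      + r * (1 - r) * (dr / (r * (1 - r)) - dF / (F * (1 - F))) ^ 2 := by
  have h1 := hr.1.ne'
  have h2 : 1 - r ≠ 0 := (sub_pos.2 hr.2).ne'
  have h3 := hF.1.ne'
  have h4 : 1 - F ≠ 0 := (sub_pos.2 hF.2).ne'
  have hdd : ddF = (r - F) * dF ^ 2 / (F * (1 - F)) := by
    rw [eq_div_iff (mul_ne_zero h3 h4), ← hode]; ring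
  rw [hdd]
  field_simp
  ring

/-- **Hamilton–Jacobi solution for the 1d exclusion process in weak contact with
reservoirs** (eq. (3-13c)): if `F` solves `F'' F(1−F) = (ρ−F)(F')²` with the Robin
boundary conditions `F'(1) = κ₁(ϱ₁ − F(1))`, `−F'(0) = κ₀(ϱ₀ − F(0))`, then
`Γ = log(ρ/(1−ρ)) − log(F/(1−F))` solves the Hamilton–Jacobi equation
`H_{0,λ}(ρ,Γ) = 0` for the quasi-potential. -/
theorem exclusion_Hamilton_Jacobi_solution
    (lam₀ lam₁ : ℝ) (ϱ₀ ϱ₁ : ℝ)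
    (hϱ₀ : ϱ₀ = Real.exp lam₀ / (1 + Real.exp lam₀))
    (hϱ₁ : ϱ₁ = Real.exp lam₁ / (1 + Real.exp lam₁))
    (κ₀ κ₁ : ℝ) (hκ₀ : 0 < κ₀) (hκ₁ : 0 < κ₁)
    (ρ ρ' F F' F'' : ℝ → ℝ)
    (hρmem : ∀ x ∈ Icc (0:ℝ) 1, ρ x ∈ Ioo (0:ℝ) 1)
    (hFmem : ∀ x ∈ Icc (0:ℝ) 1, F x ∈ Ioo (0:ℝ) 1)
    (hρ : ∀ x ∈ Icc (0:ℝ) 1, HasDerivWithinAt ρ (ρ' x) (Icc (0:ℝ) 1) x)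
    (hρ'c : ContinuousOn ρ' (Icc (0:ℝ) 1))
    (hF : ∀ x ∈ Icc (0:ℝ) 1, HasDerivWithinAt F (F' x) (Icc (0:ℝ) 1) x)
    (hF' : ∀ x ∈ Icc (0:ℝ) 1, HasDerivWithinAt F' (F'' x) (Icc (0:ℝ) 1) x)
    (hF'c : ContinuousOn F' (Icc (0:ℝ) 1)) (hF''c : ContinuousOn F'' (Icc (0:ℝ) 1))
    (hode : ∀ x ∈ Icc (0:ℝ) 1, F'' x * F x * (1 - F x) = (ρ x - F x) * F' x ^ 2)
    (hbc1 : F' 1 = κ₁ * (ϱ₁ - F 1))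
    (hbc0 : -F' 0 = κ₀ * (ϱ₀ - F 0))
    (Γ Γ' : ℝ → ℝ)
    (hΓdef : ∀ x, Γ x = Real.log (ρ x / (1 - ρ x)) - Real.log (F x / (1 - F x)))
    (hΓ : ∀ x ∈ Icc (0:ℝ) 1, HasDerivWithinAt Γ (Γ' x) (Icc (0:ℝ) 1) x)
    (hΓ'c : ContinuousOn Γ' (Icc (0:ℝ) 1)) :
    -(∫ x in (0:ℝ)..1, ρ' x * Γ' x)
      + (∫ x in (0:ℝ)..1, ρ x * (1 - ρ x) * Γ' x ^ 2)
      + κ₀ * ((1 - ρ 0) * ϱ₀ * (Real.exp (Γ 0) - 1)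
                + ρ 0 * (1 - ϱ₀) * (Real.exp (-Γ 0) - 1))
      + κ₁ * ((1 - ρ 1) * ϱ₁ * (Real.exp (Γ 1) - 1)
                + ρ 1 * (1 - ϱ₁) * (Real.exp (-Γ 1) - 1))
    = 0 := by
  have hΓ'eq : ∀ x ∈ Icc (0:ℝ) 1,
      Γ' x = ρ' x / (ρ x * (1 - ρ x)) - F' x / (F x * (1 - F x)) := by
    intro x hx
    have h := (hasDerivWithinAt_log_odds (hρ x hx) (hρmem x hx)).sub
      (hasDerivWithinAt_log_odds (hF x hx) (hFmem x hx))
    have h' : HasDerivWithinAt Γ _ (Icc (0:ℝ) 1) x := h.congr (fun y _ => hΓdef y) (hΓdef x)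
    exact (uniqueDiffOn_Icc zero_lt_one x hx).eq_deriv _ (hΓ x hx) h'
  have hG : ∀ x ∈ Icc (0:ℝ) 1,
      HasDerivWithinAt (fun y => -((ρ y - F y) * F' y / (F y * (1 - F y))))
        (-(ρ' x * Γ' x) + ρ x * (1 - ρ x) * Γ' x ^ 2) (Icc (0:ℝ) 1) x := by
    intro x hx
    have hne : F x * (1 - F x) ≠ 0 :=
      (mul_pos (hFmem x hx).1 (sub_pos.2 (hFmem x hx).2)).ne'
    have h := ((((hρ x hx).sub (hF x hx)).mul (hF' x hx)).div
      ((hF x hx).mul ((hF x hx).const_sub 1)) hne).neg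
    rw [hΓ'eq x hx, ← bulk_identity (hρmem x hx) (hFmem x hx) (hode x hx)]
    exact h
  have hρc : ContinuousOn ρ (Icc (0:ℝ) 1) := fun x hx => (hρ x hx).continuousWithinAt
  have hi1 : IntervalIntegrable (fun x => ρ' x * Γ' x) volume 0 1 :=
    (hρ'c.mul hΓ'c).intervalIntegrable_of_Icc zero_le_one
  have hi2 : IntervalIntegrable (fun x => ρ x * (1 - ρ x) * Γ' x ^ 2) volume 0 1 :=
    ((hρc.mul (continuousOn_const.sub hρc)).mul
      (hΓ'c.pow 2)).intervalIntegrable_of_Icc zero_le_one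
  have hint := intervalIntegral.integral_eq_sub_of_hasDerivAt_of_le zero_le_one
    (fun x hx => (hG x hx).continuousWithinAt)
    (fun x hx => (hG x (Ioo_subset_Icc_self hx)).hasDerivAt (Icc_mem_nhds hx.1 hx.2))
    (hi1.neg.add hi2)
  have hsplit : (∫ x in (0:ℝ)..1, (-(ρ' x * Γ' x) + ρ x * (1 - ρ x) * Γ' x ^ 2))
      = -(∫ x in (0:ℝ)..1, ρ' x * Γ' x) + ∫ x in (0:ℝ)..1, ρ x * (1 - ρ x) * Γ' x ^ 2 := by
    rw [← intervalIntegral.integral_neg]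
    exact intervalIntegral.integral_add hi1.neg hi2
  have m0 : (0:ℝ) ∈ Icc (0:ℝ) 1 := ⟨le_rfl, zero_le_one⟩
  have m1 : (1:ℝ) ∈ Icc (0:ℝ) 1 := ⟨zero_le_one, le_rfl⟩
  have hbc0' : F' 0 = -(κ₀ * (ϱ₀ - F 0)) := by linarith
  rw [← hsplit, hint, hΓdef 0, hΓdef 1, reservoir_identity ϱ₀ (hρmem 0 m0) (hFmem 0 m0),
    reservoir_identity ϱ₁ (hρmem 1 m1) (hFmem 1 m1), hbc1, hbc0']
  ring
end

section
/- Hamilton–Jacobi solution for the one-dimensional zero-range process in weak contact with reservoirs: let Φ : (0,∞) → (0,∞) be C¹ with Φ' > 0, let λ₀, λ₁ ∈ ℝ and κ₀, κ₁ > 0. Let ρ : [0,1] → (0,∞) be C¹ and F : [0,1] → (0,∞) be such that Φ∘F is C² with (Φ∘F)'' ≡ 0 on [0,1], with Robin boundary conditions (Φ∘F)'(1) = κ₁ ( e^{λ₁} − Φ(F(1)) ) and (Φ∘F)'(0) = −κ₀ ( e^{λ₀} − Φ(F(0)) ). Set Γ := log Φ(ρ) − log Φ(F). Then −∫_0^1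 Φ'(ρ(x)) ρ'(x) Γ'(x) dx + ∫_0^1 Φ(ρ(x)) Γ'(x)² dx + κ₀ [ e^{λ₀} (e^{Γ(0)} − 1) + Φ(ρ(0)) (e^{−Γ(0)} − 1) ] + κ₁ [ e^{λ₁} (e^{Γ(1)} − 1) + Φ(ρ(1)) (e^{−Γ(1)} − 1) ] = 0, i.e. Γ solves the Hamilton–Jacobi equation for the quasi-potential of the zero-range model. -/
open MeasureTheory Real Set intervalIntegral

/-!
Write `u = Φ ∘ ρ` and `w = Φ ∘ F`, so that `exp Γ = u / w` and `Γ' = u' / u - w' / w`. The bulk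
integrand of the Hamiltonian is then an exact derivative,
`-u' Γ' + u (Γ')² = Γ' (u Γ' - u') = -w' (u / w) Γ' = -(w' exp Γ)'`,
the last step because `w'' = 0`. Hence the bulk contributes `w'(0) exp Γ(0) - w'(1) exp Γ(1)`.
At each endpoint the boundary functional factors as
`e^λ (u / w - 1) + u (w / u - 1) = (u / w - 1) (e^λ - w)`, which the Robin condition turns into
`w'(1) (exp Γ(1) - 1)` and `-w'(0) (exp Γ(0) - 1)`. The sum of all terms is `w'(0) - w'(1)`, and this
vanishes since `w'` is constant.
-/

/-- Factorization of the boundary functional at `exp p = u / w`. -/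
lemma boundary_functional_factor {a u w : ℝ} (hu : 0 < u) (hw : 0 < w) :
    a * (Real.exp (Real.log u - Real.log w) - 1)
      + u * (Real.exp (-(Real.log u - Real.log w)) - 1)
    = (Real.exp (Real.log u - Real.log w) - 1) * (a - w) := by
  rw [neg_sub, Real.exp_sub, Real.exp_sub, Real.exp_log hu, Real.exp_log hw]
  field_simp
  ring

/-- **Hamilton–Jacobi solution for the 1d zero-range process in weak contact with
reservoirs**: if `Φ∘F` is affine (`(Φ∘F)'' = 0`) with the hydrodynamic Robin boundary
conditions `(Φ∘F)'(1) = κ₁(e^{λ₁} − Φ(F(1)))`, `(Φ∘F)'(0) = −κ₀(e^{λ₀} − Φ(F(0)))`,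
then `Γ = log Φ(ρ) − log Φ(F)` solves the Hamilton–Jacobi equation for the
quasi-potential of the zero-range model. -/
theorem zero_range_Hamilton_Jacobi_solution
    (Φ : ℝ → ℝ) (hΦ : ContDiffOn ℝ 1 Φ (Ioi (0:ℝ)))
    (hΦpos : ∀ x ∈ Ioi (0:ℝ), 0 < Φ x)
    (hΦ' : ∀ x ∈ Ioi (0:ℝ), 0 < deriv Φ x)
    (lam₀ lam₁ : ℝ) (κ₀ κ₁ : ℝ) (hκ₀ : 0 < κ₀) (hκ₁ : 0 < κ₁)
    (ρ ρ' F : ℝ → ℝ)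
    (hρmem : ∀ x ∈ Icc (0:ℝ) 1, ρ x ∈ Ioi (0:ℝ))
    (hFmem : ∀ x ∈ Icc (0:ℝ) 1, F x ∈ Ioi (0:ℝ))
    (hρ : ∀ x ∈ Icc (0:ℝ) 1, HasDerivWithinAt ρ (ρ' x) (Icc (0:ℝ) 1) x)
    (hρ'c : ContinuousOn ρ' (Icc (0:ℝ) 1))
    (ΦF' ΦF'' : ℝ → ℝ)
    (hΦF : ∀ x ∈ Icc (0:ℝ) 1,
      HasDerivWithinAt (fun y => Φ (F y)) (ΦF' x) (Icc (0:ℝ) 1) x)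
    (hΦF' : ∀ x ∈ Icc (0:ℝ) 1, HasDerivWithinAt ΦF' (ΦF'' x) (Icc (0:ℝ) 1) x)
    (hΦF'c : ContinuousOn ΦF' (Icc (0:ℝ) 1))
    (hode : ∀ x ∈ Icc (0:ℝ) 1, ΦF'' x = 0)
    (hbc1 : ΦF' 1 = κ₁ * (Real.exp lam₁ - Φ (F 1)))
    (hbc0 : ΦF' 0 = -κ₀ * (Real.exp lam₀ - Φ (F 0)))
    (Γ Γ' : ℝ → ℝ)
    (hΓdef : ∀ x, Γ x = Real.log (Φ (ρ x)) - Real.log (Φ (F x)))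
    (hΓ : ∀ x ∈ Icc (0:ℝ) 1, HasDerivWithinAt Γ (Γ' x) (Icc (0:ℝ) 1) x)
    (hΓ'c : ContinuousOn Γ' (Icc (0:ℝ) 1)) :
    -(∫ x in (0:ℝ)..1, deriv Φ (ρ x) * ρ' x * Γ' x)
      + (∫ x in (0:ℝ)..1, Φ (ρ x) * Γ' x ^ 2)
      + κ₀ * (Real.exp lam₀ * (Real.exp (Γ 0) - 1)
                + Φ (ρ 0) * (Real.exp (-Γ 0) - 1))
      + κ₁ * (Real.exp lam₁ * (Real.exp (Γ 1) - 1)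
                + Φ (ρ 1) * (Real.exp (-Γ 1) - 1))
    = 0 := by
  have h0 : (0:ℝ) ∈ Icc (0:ℝ) 1 := by simp
  have h1 : (1:ℝ) ∈ Icc (0:ℝ) 1 := by simp
  have hI : uIcc (0:ℝ) 1 = Icc 0 1 := uIcc_of_le zero_le_one
  have hΦd : ∀ y ∈ Ioi (0:ℝ), HasDerivAt Φ (deriv Φ y) y := fun y hy =>
    ((hΦ.differentiableOn one_ne_zero).differentiableAt (Ioi_mem_nhds hy)).hasDerivAt
  have hu : ∀ x ∈ Icc (0:ℝ) 1,
      HasDerivWithinAt (fun y => Φ (ρ y)) (deriv Φ (ρ x) * ρ' x) (Icc (0:ℝ) 1) x := fun x hx =>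
    (hΦd _ (hρmem x hx)).comp_hasDerivWithinAt x (hρ x hx)
  have hup : ∀ x ∈ Icc (0:ℝ) 1, 0 < Φ (ρ x) := fun x hx => hΦpos _ (hρmem x hx)
  have hwp : ∀ x ∈ Icc (0:ℝ) 1, 0 < Φ (F x) := fun x hx => hΦpos _ (hFmem x hx)
  have hΓ'eq : ∀ x ∈ Icc (0:ℝ) 1,
      Γ' x = deriv Φ (ρ x) * ρ' x / Φ (ρ x) - ΦF' x / Φ (F x) := by
    intro x hx
    have h := ((hu x hx).log (hup x hx).ne').sub ((hΦF x hx).log (hwp x hx).ne')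
    have hfun : Γ = (fun y => Real.log (Φ (ρ y))) - fun y => Real.log (Φ (F y)) := funext hΓdef
    rw [← hfun] at h
    exact (uniqueDiffOn_Icc zero_lt_one x hx).eq_deriv _ (hΓ x hx) h
  have hρc : ContinuousOn ρ (Icc (0:ℝ) 1) := fun x hx => (hρ x hx).continuousWithinAt
  have huc : ContinuousOn (fun y => Φ (ρ y)) (Icc (0:ℝ) 1) :=
    fun x hx => (hu x hx).continuousWithinAt
  have hΓc : ContinuousOn Γ (Icc (0:ℝ) 1) := fun x hx => (hΓ x hx).continuousWithinAt
  have hΦ'c : ContinuousOn (fun x => deriv Φ (ρ x)) (Icc (0:ℝ) 1) :=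
    (hΦ.continuousOn_deriv_of_isOpen isOpen_Ioi le_rfl).comp hρc hρmem
  have int1 : IntervalIntegrable (fun x => deriv Φ (ρ x) * ρ' x * Γ' x) volume 0 1 :=
    ContinuousOn.intervalIntegrable (by rw [hI]; exact (hΦ'c.mul hρ'c).mul hΓ'c)
  have int2 : IntervalIntegrable (fun x => Φ (ρ x) * Γ' x ^ 2) volume 0 1 :=
    ContinuousOn.intervalIntegrable (by rw [hI]; exact huc.mul (hΓ'c.pow 2))
  -- The bulk integrand is the exact derivative of `-w' exp Γ`, where `w = Φ ∘ F`.
  have hbulk : (∫ x in (0:ℝ)..1, (Φ (ρ x) * Γ' x ^ 2 - deriv Φ (ρ x) * ρ' x * Γ' x))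
      = -(ΦF' 1 * Real.exp (Γ 1)) - -(ΦF' 0 * Real.exp (Γ 0)) := by
    refine integral_eq_sub_of_hasDerivAt_of_le (f := fun x => -(ΦF' x * Real.exp (Γ x)))
      zero_le_one (hΦF'c.mul hΓc.rexp).neg (fun x hx => ?_) (int2.sub int1)
    have hx' := Ioo_subset_Icc_self hx
    have h := (((hΦF' x hx').mul (hΓ x hx').exp).neg).hasDerivAt (Icc_mem_nhds hx.1 hx.2)
    refine h.congr_deriv ?_
    have hux := (hup x hx').ne'
    have hwx := (hwp x hx').ne'
    rw [hode x hx', hΓdef, Real.exp_sub, Real.exp_log (hup x hx'), Real.exp_log (hwp x hx'),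
      hΓ'eq x hx']
    field_simp
    ring
  rw [integral_sub int2 int1] at hbulk
  have hconst : ΦF' 1 = ΦF' 0 := by
    refine constant_of_has_deriv_right_zero hΦF'c (fun x hx => ?_) 1 h1
    have h := hΦF' x (Ico_subset_Icc_self hx)
    rw [hode x (Ico_subset_Icc_self hx)] at h
    exact h.mono_of_mem_nhdsWithin (Icc_mem_nhdsGE_of_mem hx)
  have b0 := boundary_functional_factor (a := Real.exp lam₀) (hup 0 h0) (hwp 0 h0)
  have b1 := boundary_functional_factor (a := Real.exp lam₁) (hup 1 h1) (hwp 1 h1)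
  rw [← hΓdef] at b0 b1
  rw [b0, b1]
  linear_combination hbulk - (Real.exp (Γ 1) - 1) * hbc1 + (Real.exp (Γ 0) - 1) * hbc0 - hconst
end

section
/- Hamilton–Jacobi solution for the one-dimensional KMP model in weak contact with reservoirs (the new equation (3-13d)): let τ₀, τ₁ > 0 and κ₀, κ₁ > 0. Let ρ : [0,1] → (0,∞) be C¹ and F : [0,1] → (0,∞) be C² such that F''(x) F(x)² + (ρ(x) − F(x)) F'(x)² = 0 for all x ∈ [0,1]. Assume the denominators δ_k := ρ(k)F(k) − τ_k ρ(k) + τ_k F(k) are nonzero for k = 0, 1, and that F satisfies the boundary conditions F'(1) = κ₁ F(1)² (τ₁ − F(1))/δ₁ and −F'(0) = κ₀ F(0)² (τ₀ − F(0))/δ₀. Set Γ := 1/F − 1/ρ. Then −∫_0^1 ρ'(x) Γ'(x) dx + ∫_0^1 ρ(x)² Γ'(x)² dx + Σ_{k∈{0,1}} κ_k [ (τ_k/(ρ(k)+τ_k)) (1/(1−τ_k Γ(k)) − 1) + (ρ(k)/(ρ(k)+τ_k)) (1/(1+ρ(k) Γ(k)) − 1) ] = 0, i.e. Γ solves the Hamilton–Jacobi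 equation for the quasi-potential of the KMP model. -/
/-!
With `Γ' = ρ'/ρ² - F'/F²` the bulk integrand is `ρ²Γ'² - ρ'Γ' = ρ²F'²/F⁴ - ρ'F'/F²`. The equation
`F''F² + (ρ - F)F'² = 0` makes it an exact derivative, namely that of `F'(F - ρ)/F²`
(`hasDerivWithinAt_kmpPrimitive`), so the bulk contributes only the boundary values of this
primitive. Each reservoir term factors as `(F - ρ)(F - τ)/δ` (`kmp_boundary_eq`), because
`δ - τ² = (F - τ)(ρ + τ)`; the boundary conditions for `F'` make the two contributions cancel
separately at each endpoint.
-/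



open MeasureTheory Real Set intervalIntegral

/-- The bulk Hamiltonian density is an exact derivative along solutions of the auxiliary
equation. -/
lemma hasDerivWithinAt_kmpPrimitive {ρ F F' : ℝ → ℝ} {r' f'' x : ℝ} {s : Set ℝ}
    (hFx : F x ≠ 0) (hρ : HasDerivWithinAt ρ r' s x) (hF : HasDerivWithinAt F (F' x) s x)
    (hF' : HasDerivWithinAt F' f'' s x)
    (hode : f'' * F x ^ 2 + (ρ x - F x) * F' x ^ 2 = 0) :
    HasDerivWithinAt (fun y => F' y * (F y - ρ y) / F y ^ 2)
      (ρ x ^ 2 * F' x ^ 2 / F x ^ 4 - r' * F' x / F x ^ 2) s x := by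
  have h := (hF'.fun_mul (hF.fun_sub hρ)).fun_div (hF.fun_pow 2) (pow_ne_zero 2 hFx)
  refine h.congr_deriv ?_
  have hf : f'' = (F x - ρ x) * F' x ^ 2 / F x ^ 2 := by
    field_simp
    linear_combination hode
  rw [hf]
  field_simp
  ring

/-- Closed form of the KMP boundary functional at `Γ = 1/f - 1/r`. -/
lemma kmp_boundary_eq {τ r f : ℝ} (hτ : 0 < τ) (hr : 0 < r) (hf : 0 < f)
    (hδ : r * f - τ * r + τ * f ≠ 0) :
    (τ / (r + τ)) * (1 / (1 - τ * (1 / f - 1 / r)) - 1)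
        + (r / (r + τ)) * (1 / (1 + r * (1 / f - 1 / r)) - 1)
      = (f - r) * (f - τ) / (r * f - τ * r + τ * f) := by
  have h1 : 1 - τ * (1 / f - 1 / r) = (r * f - τ * r + τ * f) / (r * f) := by
    field_simp
    ring
  have h2 : 1 + r * (1 / f - 1 / r) = r / f := by
    field_simp
    ring
  have h3 : r + τ ≠ 0 := by positivity
  rw [h1, h2, one_div_div, one_div_div]
  generalize hd : r * f - τ * r + τ * f = d at hδ ⊢
  field_simp
  subst hd
  ring

/-- **Hamilton–Jacobi solution for the 1d KMP model in weak contact with reservoirs**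
(the new equation (3-13d)): if `F` solves `F'' F² + (ρ−F)(F')² = 0` with the boundary
conditions `F'(1) = κ₁ F(1)²(τ₁−F(1))/δ₁`, `−F'(0) = κ₀ F(0)²(τ₀−F(0))/δ₀`, where
`δ_k = ρ(k)F(k) − τ_k ρ(k) + τ_k F(k) ≠ 0`, then `Γ = 1/F − 1/ρ` solves the
Hamilton–Jacobi equation for the quasi-potential of the KMP model. -/
theorem kmp_Hamilton_Jacobi_solution
    (τ₀ τ₁ : ℝ) (hτ₀ : 0 < τ₀) (hτ₁ : 0 < τ₁)
    (κ₀ κ₁ : ℝ) (hκ₀ : 0 < κ₀) (hκ₁ : 0 < κ₁)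
    (ρ ρ' F F' F'' : ℝ → ℝ)
    (hρmem : ∀ x ∈ Icc (0:ℝ) 1, ρ x ∈ Ioi (0:ℝ))
    (hFmem : ∀ x ∈ Icc (0:ℝ) 1, F x ∈ Ioi (0:ℝ))
    (hρ : ∀ x ∈ Icc (0:ℝ) 1, HasDerivWithinAt ρ (ρ' x) (Icc (0:ℝ) 1) x)
    (hρ'c : ContinuousOn ρ' (Icc (0:ℝ) 1))
    (hF : ∀ x ∈ Icc (0:ℝ) 1, HasDerivWithinAt F (F' x) (Icc (0:ℝ) 1) x)
    (hF' : ∀ x ∈ Icc (0:ℝ) 1, HasDerivWithinAt F' (F'' x) (Icc (0:ℝ) 1) x)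
    (hF'c : ContinuousOn F' (Icc (0:ℝ) 1)) (hF''c : ContinuousOn F'' (Icc (0:ℝ) 1))
    (hode : ∀ x ∈ Icc (0:ℝ) 1, F'' x * F x ^ 2 + (ρ x - F x) * F' x ^ 2 = 0)
    (hδ₀ : ρ 0 * F 0 - τ₀ * ρ 0 + τ₀ * F 0 ≠ 0)
    (hδ₁ : ρ 1 * F 1 - τ₁ * ρ 1 + τ₁ * F 1 ≠ 0)
    (hbc1 : F' 1 = κ₁ * F 1 ^ 2 * (τ₁ - F 1) / (ρ 1 * F 1 - τ₁ * ρ 1 + τ₁ * F 1))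
    (hbc0 : -F' 0 = κ₀ * F 0 ^ 2 * (τ₀ - F 0) / (ρ 0 * F 0 - τ₀ * ρ 0 + τ₀ * F 0))
    (Γ Γ' : ℝ → ℝ)
    (hΓdef : ∀ x, Γ x = 1 / F x - 1 / ρ x)
    (hΓ : ∀ x ∈ Icc (0:ℝ) 1, HasDerivWithinAt Γ (Γ' x) (Icc (0:ℝ) 1) x)
    (hΓ'c : ContinuousOn Γ' (Icc (0:ℝ) 1)) :
    -(∫ x in (0:ℝ)..1, ρ' x * Γ' x)
      + (∫ x in (0:ℝ)..1, ρ x ^ 2 * Γ' x ^ 2)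
      + κ₀ * ((τ₀ / (ρ 0 + τ₀)) * (1 / (1 - τ₀ * Γ 0) - 1)
                + (ρ 0 / (ρ 0 + τ₀)) * (1 / (1 + ρ 0 * Γ 0) - 1))
      + κ₁ * ((τ₁ / (ρ 1 + τ₁)) * (1 / (1 - τ₁ * Γ 1) - 1)
                + (ρ 1 / (ρ 1 + τ₁)) * (1 / (1 + ρ 1 * Γ 1) - 1))
    = 0 := by
  have hρ0 : ∀ x ∈ Icc (0:ℝ) 1, ρ x ≠ 0 := fun x hx => ne_of_gt (hρmem x hx)
  have hF0 : ∀ x ∈ Icc (0:ℝ) 1, F x ≠ 0 := fun x hx => ne_of_gt (hFmem x hx)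
  have h0 : (0:ℝ) ∈ Icc (0:ℝ) 1 := by simp
  have h1 : (1:ℝ) ∈ Icc (0:ℝ) 1 := by simp
  have hΓ' : ∀ x ∈ Icc (0:ℝ) 1, Γ' x = ρ' x / ρ x ^ 2 - F' x / F x ^ 2 := by
    intro x hx
    have h : HasDerivWithinAt Γ (-F' x / F x ^ 2 - -ρ' x / ρ x ^ 2) (Icc (0:ℝ) 1) x := by
      have := ((hF x hx).fun_inv (hF0 x hx)).fun_sub ((hρ x hx).fun_inv (hρ0 x hx))
      exact this.congr (fun y _ => by simp [hΓdef]) (by simp [hΓdef])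
    rw [(uniqueDiffOn_Icc zero_lt_one x hx).eq_deriv _ (hΓ x hx) h]
    ring
  have hρc : ContinuousOn ρ (Icc (0:ℝ) 1) := fun x hx => (hρ x hx).continuousWithinAt
  have hi1 : IntervalIntegrable (fun x => ρ' x * Γ' x) volume 0 1 :=
    (hρ'c.mul hΓ'c).intervalIntegrable_of_Icc zero_le_one
  have hi2 : IntervalIntegrable (fun x => ρ x ^ 2 * Γ' x ^ 2) volume 0 1 :=
    ((hρc.pow 2).mul (hΓ'c.pow 2)).intervalIntegrable_of_Icc zero_le_one
  have hA : ∀ x ∈ Icc (0:ℝ) 1, HasDerivWithinAt (fun y => F' y * (F y - ρ y) / F y ^ 2)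
      (ρ x ^ 2 * Γ' x ^ 2 - ρ' x * Γ' x) (Icc (0:ℝ) 1) x := by
    intro x hx
    refine (hasDerivWithinAt_kmpPrimitive (hF0 x hx) (hρ x hx) (hF x hx) (hF' x hx)
      (hode x hx)).congr_deriv ?_
    have := hρ0 x hx
    have := hF0 x hx
    rw [hΓ' x hx]
    field_simp
    ring
  have hint := integral_eq_sub_of_hasDerivAt_of_le zero_le_one
    (fun x hx => (hA x hx).continuousWithinAt)
    (fun x hx => (hA x (Ioo_subset_Icc_self hx)).hasDerivAt (Icc_mem_nhds hx.1 hx.2))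
    (hi2.sub hi1)
  rw [integral_sub hi2 hi1] at hint
  rw [hΓdef 0, hΓdef 1, kmp_boundary_eq hτ₀ (hρmem 0 h0) (hFmem 0 h0) hδ₀,
    kmp_boundary_eq hτ₁ (hρmem 1 h1) (hFmem 1 h1) hδ₁]
  have e1 : F' 1 * (F 1 - ρ 1) / F 1 ^ 2
      = -(κ₁ * ((F 1 - ρ 1) * (F 1 - τ₁) / (ρ 1 * F 1 - τ₁ * ρ 1 + τ₁ * F 1))) := by
    have := hF0 1 h1
    rw [hbc1]
    generalize ρ 1 * F 1 - τ₁ * ρ 1 + τ₁ * F 1 = d at hδ₁ ⊢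
    field_simp
    ring
  have e0 : F' 0 * (F 0 - ρ 0) / F 0 ^ 2
      = κ₀ * ((F 0 - ρ 0) * (F 0 - τ₀) / (ρ 0 * F 0 - τ₀ * ρ 0 + τ₀ * F 0)) := by
    have := hF0 0 h0
    rw [← neg_neg (F' 0), hbc0]
    generalize ρ 0 * F 0 - τ₀ * ρ 0 + τ₀ * F 0 = d at hδ₀ ⊢
    field_simp
    ring
  rw [e1, e0] at hint
  linear_combination hint
end
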